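/- Let K be a compact metric space equipped with its Borel σ-algebra, and let U be a finite-dimensional subspace of the space C(K, ℝ) of continuous real-valued functions on K. On the set P(K) of Borel probability measures on K define a preorder by: ν ⪯ ν' iff ∫_K u² dν ≤ ∫_K u² dν' for every u ∈ U. Let q : K → P(K) be a Markov kernel (a measurable map, where P(K) carries the Borel σ-algebra of the weak convergence topology) such that u(x)² ≤ ∫_K u² d(q x) for every x ∈ K and every u ∈ U. Fix ν₁ ∈ P(K) and set M₁ = {ν ∈ P(K) : ν₁ ⪯ ν}. If ν is a maximal element of M₁ (i.e. ν ∈ M₁ and every σ ∈ M₁ with ν ⪯ σ satisfies σ ⪯ ν), then for every u ∈ U, the equality u(x)² = ∫_K u² d(q x) holds for ν-almost every x ∈ K; in particular, ν({x ∈ K : u(x)² < ∫_K u² d(q x)}) = 0. -/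

import Mathlib

open MeasureTheory Filter Topology

/-- The preorder on probability measures given by comparison of the integrals of `u ^ 2`
for all `u` in a subspace `U` of continuous functions: `ν ⪯ ν'` iff
`∫ u² dν ≤ ∫ u² dν'` for every `u ∈ U`. -/
def sqPre {K : Type*} [TopologicalSpace K] [MeasurableSpace K]
    (U : Submodule ℝ C(K, ℝ)) (ν ν' : ProbabilityMeasure K) : Prop :=
  ∀ u ∈ U, ∫ x, (u x) ^ 2 ∂(ν : Measure K) ≤ ∫ x, (u x) ^ 2 ∂(ν' : Measure K)

/-!
Let `σ` be the image of `ν` under the kernel. Integrating `u² ≤ ∫ u² d(q ·)` against `ν` gives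
`ν ⪯ σ`, so maximality forces `∫ u² dν = ∫ u² dσ = ∫ (∫ u² d(q x)) dν(x)`. Two functions that are
ordered pointwise and have the same integral agree almost everywhere.
-/

open ProbabilityTheory

theorem sqPre.trans {K : Type*} [TopologicalSpace K] [MeasurableSpace K] {U : Submodule ℝ C(K, ℝ)}
    {ν₁ ν₂ ν₃ : ProbabilityMeasure K} (h₁₂ : sqPre U ν₁ ν₂) (h₂₃ : sqPre U ν₂ ν₃) :
    sqPre U ν₁ ν₃ :=
  fun u hu ↦ (h₁₂ u hu).trans (h₂₃ u hu)

section WeakBorel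

variable {X : Type*} [TopologicalSpace X] [HasOuterApproxClosed X] [MeasurableSpace X]

theorem measurable_borel_probabilityMeasure_apply_of_isClosed [OpensMeasurableSpace X]
    {F : Set X} (hF : IsClosed F) :
    Measurable[borel (ProbabilityMeasure X)] fun μ : ProbabilityMeasure X ↦ (μ : Measure X) F := by
  borelize (ProbabilityMeasure X)
  have h_appr (n : ℕ) :
      Measurable fun μ : ProbabilityMeasure X ↦ ∫⁻ x, hF.apprSeq n x ∂(μ : Measure X) :=
    (ProbabilityMeasure.continuous_lintegral_boundedContinuousFunction _).measurable
  exact measurable_of_tendsto_metrizable h_appr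
    (tendsto_pi_nhds.2 fun μ ↦ HasOuterApproxClosed.tendsto_lintegral_apprSeq hF (μ : Measure X))

/-- The instance on the left is generated by the evaluations `μ ↦ μ s`. -/
theorem probabilityMeasure_measurableSpace_le_borel [BorelSpace X] :
    (inferInstance : MeasurableSpace (ProbabilityMeasure X)) ≤ borel (ProbabilityMeasure X) := by
  have h_gen : ‹MeasurableSpace X› = .generateFrom {F : Set X | IsClosed F} :=
    BorelSpace.measurable_eq.trans borel_eq_generateFrom_isClosed
  have h_coe : Measurable[borel (ProbabilityMeasure X)]
      fun μ : ProbabilityMeasure X ↦ (μ : Measure X) :=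
    Measurable.measure_of_isPiSystem_of_isProbabilityMeasure h_gen isPiSystem_isClosed
      fun _ hF ↦ measurable_borel_probabilityMeasure_apply_of_isClosed hF
  exact h_coe.comap_le

end WeakBorel

section KernelIntegral

variable {α β E : Type*} [MeasurableSpace α] [MeasurableSpace β] [NormedAddCommGroup E]
  [NormedSpace ℝ E] {μ : Measure α} {κ : Kernel α β} {f : β → E}

theorem integrable_integral_kernel_of_integrable_comp (hf : Integrable f (κ ∘ₘ μ)) :
    Integrable (fun x ↦ ∫ y, f y ∂κ x) μ := by
  rw [Measure.comp_eq_comp_const_apply] at hf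
  simpa using hf.integral_comp

theorem integral_measure_comp (hf : Integrable f (κ ∘ₘ μ)) :
    ∫ y, f y ∂(κ ∘ₘ μ) = ∫ x, ∫ y, f y ∂κ x ∂μ := by
  rw [Measure.comp_eq_comp_const_apply] at hf ⊢
  simpa using Kernel.integral_comp hf

end KernelIntegral

section Subharmonic

variable {α : Type*} [MeasurableSpace α] {μ : Measure α} {κ : Kernel α α} {f : α → ℝ}

theorem integral_le_integral_comp_of_ae_le (hfμ : Integrable f μ) (hfκ : Integrable f (κ ∘ₘ μ))
    (hle : ∀ᵐ x ∂μ, f x ≤ ∫ y, f y ∂κ x) :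
    ∫ x, f x ∂μ ≤ ∫ x, f x ∂(κ ∘ₘ μ) :=
  (integral_mono_ae hfμ (integrable_integral_kernel_of_integrable_comp hfκ) hle).trans_eq
    (integral_measure_comp hfκ).symm

theorem ae_eq_integral_kernel_of_integral_comp_le (hfμ : Integrable f μ)
    (hfκ : Integrable f (κ ∘ₘ μ)) (hle : ∀ᵐ x ∂μ, f x ≤ ∫ y, f y ∂κ x)
    (hint : ∫ x, f x ∂(κ ∘ₘ μ) ≤ ∫ x, f x ∂μ) :
    ∀ᵐ x ∂μ, f x = ∫ y, f y ∂κ x := by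
  have h_eq : ∫ x, f x ∂μ = ∫ x, ∫ y, f y ∂κ x ∂μ :=
    ((integral_le_integral_comp_of_ae_le hfμ hfκ hle).antisymm hint).trans
      (integral_measure_comp hfκ)
  exact (integral_eq_iff_of_ae_le hfμ
    (integrable_integral_kernel_of_integrable_comp hfκ) hle).1 h_eq

end Subharmonic

theorem maximal_element_ae_equality_general
    {K : Type*} [TopologicalSpace K] [CompactSpace K] [MeasurableSpace K] [OpensMeasurableSpace K]
    (U : Submodule ℝ C(K, ℝ)) {q : K → ProbabilityMeasure K} (hq : Measurable q)
    (hqU : ∀ x : K, ∀ u ∈ U, (u x) ^ 2 ≤ ∫ y, (u y) ^ 2 ∂(q x : Measure K))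
    {ν : ProbabilityMeasure K} (hmax : ∀ σ : ProbabilityMeasure K, sqPre U ν σ → sqPre U σ ν) :
    ∀ u ∈ U,
      (∀ᵐ x ∂(ν : Measure K), (u x) ^ 2 = ∫ y, (u y) ^ 2 ∂(q x : Measure K)) ∧
      (ν : Measure K) {x : K | (u x) ^ 2 < ∫ y, (u y) ^ 2 ∂(q x : Measure K)} = 0 := by
  let κ : Kernel K K := ⟨fun x ↦ (q x : Measure K), measurable_subtype_coe.comp hq⟩
  have : IsMarkovKernel κ := ⟨fun x ↦ (q x).2⟩
  let σ : ProbabilityMeasure K := ⟨κ ∘ₘ (ν : Measure K), inferInstance⟩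
  have h_int (u : C(K, ℝ)) (μ : ProbabilityMeasure K) :
      Integrable (fun x ↦ (u x) ^ 2) (μ : Measure K) :=
    (u ^ 2).continuous.integrable_of_hasCompactSupport (.of_compactSpace _)
  have hle (u) (hu : u ∈ U) : ∀ᵐ x ∂(ν : Measure K), (u x) ^ 2 ≤ ∫ y, (u y) ^ 2 ∂κ x :=
    ae_of_all _ fun x ↦ hqU x u hu
  have hνσ : sqPre U ν σ := fun u hu ↦
    integral_le_integral_comp_of_ae_le (h_int u ν) (h_int u σ) (hle u hu)
  intro u hu
  have h_eq : ∀ᵐ x ∂(ν : Measure K), (u x) ^ 2 = ∫ y, (u y) ^ 2 ∂(q x : Measure K) :=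
    ae_eq_integral_kernel_of_integral_comp_le (h_int u ν) (h_int u σ) (hle u hu)
      (hmax σ hνσ u hu)
  exact ⟨h_eq, measure_mono_null (fun _ hx ↦ ne_of_lt hx) (ae_iff.1 h_eq)⟩

theorem maximal_element_ae_equality
    {K : Type*} [MetricSpace K] [CompactSpace K] [MeasurableSpace K] [BorelSpace K]
    (U : Submodule ℝ C(K, ℝ)) [FiniteDimensional ℝ U]
    (q : K → ProbabilityMeasure K)
    (hq : @Measurable K (ProbabilityMeasure K) _ (borel (ProbabilityMeasure K)) q)
    (hqU : ∀ x : K, ∀ u ∈ U, (u x) ^ 2 ≤ ∫ y, (u y) ^ 2 ∂(q x : Measure K))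
    (ν₁ ν : ProbabilityMeasure K)
    (hν : sqPre U ν₁ ν)
    (hmax : ∀ σ : ProbabilityMeasure K, sqPre U ν₁ σ → sqPre U ν σ → sqPre U σ ν) :
    ∀ u ∈ U,
      (∀ᵐ x ∂(ν : Measure K), (u x) ^ 2 = ∫ y, (u y) ^ 2 ∂(q x : Measure K)) ∧
      (ν : Measure K) {x : K | (u x) ^ 2 < ∫ y, (u y) ^ 2 ∂(q x : Measure K)} = 0 :=
  maximal_element_ae_equality_general U (hq.mono le_rfl probabilityMeasure_measurableSpace_le_borel)
    hqU fun σ hσ ↦ hmax σ (hν.trans hσ) hσ
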